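/- Sharpness of the L∞ approximation order: for each n ≥ 2 let h := 1/(n−1) and let ρ_h be the set of uniformly spaced knots r_j := 1 + (j−1)h, j ∈ {1,…,n} (so [r₁,r_n] = [1,2]). Then for every ε > 0 there exist f_ε ∈ Λ₀ and a constant M > 0 such that for all sufficiently small h > 0 of this form and for every Beppo Levi L₀-spline σ_h ∈ S₀(ρ_h), one has M·h^{3/2+ε} ≤ sup_{r ∈ [1,2]} |f_ε(r) − σ_h(r)|. -/

import Mathlib

open MeasureTheory Set Filter

noncomputable section

/-- The radial Beppo Levi energy space `Λ₀`: functions `f : (0,∞) → ℂ` of class `C¹`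
whose derivative `f′` is locally absolutely continuous on compact subintervals of `(0,∞)`
(encoded by the fundamental theorem of calculus with an integrable density `f″`),
and whose radial Beppo Levi energy `∫₀^∞ ( r·|f″(r)|² + (1/r)·|f′(r)|² ) dr` is finite. -/
structure Lambda0 where
  f : ℝ → ℂ
  f' : ℝ → ℂ
  f'' : ℝ → ℂ
  hasDeriv : ∀ r ∈ Set.Ioi (0:ℝ), HasDerivAt f (f' r) r
  contDeriv : ContinuousOn f' (Set.Ioi 0)
  locAC : ∀ a b : ℝ, 0 < a → a ≤ b →
    MeasureTheory.IntegrableOn f'' (Set.Icc a b) ∧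
      ∀ x ∈ Set.Icc a b, f' x = f' a + ∫ t in a..x, f'' t
  energyFin : MeasureTheory.IntegrableOn
    (fun r : ℝ => r * ‖f'' r‖ ^ 2 + (1 / r) * ‖f' r‖ ^ 2) (Set.Ioi 0)

/-- The squared radial Beppo Levi energy `‖·‖₀²` of a function with first derivative `g'`
and second derivative `g''`. -/
def energySq (g' g'' : ℝ → ℂ) : ℝ :=
  ∫ r in Set.Ioi (0:ℝ), (r * ‖g'' r‖ ^ 2 + (1 / r) * ‖g' r‖ ^ 2)

/-- The seminorm `‖f‖₀`. -/
def Lambda0.seminorm0 (F : Lambda0) : ℝ :=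
  Real.sqrt (energySq F.f' F.f'')

/-- The semi-inner product `⟨f,g⟩₀`. -/
def innerBL (F G : Lambda0) : ℂ :=
  ∫ r in Set.Ioi (0:ℝ),
    ((r : ℂ) * F.f'' r * (starRingEnd ℂ) (G.f'' r) +
      (1 / (r : ℂ)) * F.f' r * (starRingEnd ℂ) (G.f' r))

/-- A Beppo Levi `L₀`-spline on the positive knots `r 1 < r 2 < … < r n`:
piecewise of the form `a·x² + b·x²·ln x + c + d·ln x` between consecutive knots,
of the form `a·x² + b·x²·ln x + c` on `(0, r 1)`, of the form `c + d·ln x` on `(r n, ∞)`,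
`C²` throughout `(0,∞)`, and continuously extended at `0`. -/
structure IsBLSpline (n : ℕ) (r : ℕ → ℝ) (η : ℝ → ℂ) : Prop where
  pieces : ∀ j : ℕ, 1 ≤ j → j + 1 ≤ n → ∃ a b c d : ℂ,
    ∀ x ∈ Set.Ioo (r j) (r (j + 1)),
      η x = a * (x : ℂ) ^ 2 + b * (x : ℂ) ^ 2 * (Real.log x : ℂ) + c + d * (Real.log x : ℂ)
  left : ∃ a b c : ℂ, ∀ x ∈ Set.Ioo (0 : ℝ) (r 1),
      η x = a * (x : ℂ) ^ 2 + b * (x : ℂ) ^ 2 * (Real.log x : ℂ) + c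
  right : ∃ c d : ℂ, ∀ x ∈ Set.Ioi (r n), η x = c + d * (Real.log x : ℂ)
  smooth : ContDiffOn ℝ 2 η (Set.Ioi 0)
  cont0 : ContinuousWithinAt η (Set.Ici 0) 0

/-- A Beppo Levi `L₀`-spline is non-singular if on `(0, r₁)` it has the form `a·x² + c`. -/
def NonSingularBLS (r1 : ℝ) (η : ℝ → ℂ) : Prop :=
  ∃ a c : ℂ, ∀ x ∈ Set.Ioo (0 : ℝ) r1, η x = a * (x : ℂ) ^ 2 + c

/-- Rabut's kernel `K`. -/
def Kfun (r t : ℝ) : ℝ :=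
  if r ≤ t then 0 else (1 / 4) * (t ^ 2 - r ^ 2 + (r ^ 2 + t ^ 2) * Real.log (r / t))

/-- The limiting kernel `H_{0,∞}` (with left endpoint knot `r1`). -/
def Hfun (r1 r t : ℝ) : ℝ :=
  Kfun r t - Kfun r r1 - Kfun r1 t + (1 / 4) * (r ^ 2 - r1 ^ 2) * Real.log (t / r1)

/-- The basis function `φ₀`. -/
def phi0 (r : ℝ) : ℝ :=
  if r ≤ 1 then r ^ 2 - r ^ 2 * Real.log r else 1 + Real.log r

/-- Johnson's compactly supported profile `η₂`. -/
def eta2 (x : ℝ) : ℂ :=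
  (((4 / 3 : ℝ) * (Real.log 2 - phi0 x + phi0 (x / 2)) : ℝ) : ℂ)

/-- The non-singular compactly supported profile `β`. -/
def betaFn (x : ℝ) : ℂ :=
  (((1 / 5 : ℝ) * (27 * Real.log 3 - 32 * Real.log 2 + 5 * phi0 x
      - 32 * phi0 (x / 2) + 27 * phi0 (x / 3)) : ℝ) : ℂ)

/-- `Ker L₀ = span{r², r² ln r, 1, ln r}`, as functions on `(0,∞)`. -/
def KerL0 : Set (ℝ → ℂ) :=
  {η | ∃ a b c d : ℂ, ∀ x : ℝ, 0 < x →
    η x = a * (x : ℂ) ^ 2 + b * (x : ℂ) ^ 2 * (Real.log x : ℂ) + c + d * (Real.log x : ℂ)}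

/-- `α(h) = inf_{η ∈ Ker L₀} sup_{t ∈ [0,1]} |t^μ − η(1+th)|`. -/
def alphaFn (μ h : ℝ) : ℝ :=
  sInf {v : ℝ | ∃ η ∈ KerL0,
    v = sSup ((fun t : ℝ => ‖((t ^ μ : ℝ) : ℂ) - η (1 + t * h)‖) '' Set.Icc (0 : ℝ) 1)}

/-- Derivative of the truncated power away from the origin. -/
lemma aux_deriv_ne {p : ℝ} (hp : p ≠ 0) (hp1 : p ≠ 1) {u : ℝ} (hu : u ≠ 0) :
    HasDerivAt (fun u : ℝ => (max u 0) ^ p) (p * (max u 0) ^ (p - 1)) u := by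
  rcases lt_or_gt_of_ne hu with h | h
  · have h1 : HasDerivAt (fun _ : ℝ => (0:ℝ)) 0 u := hasDerivAt_const _ _
    have h2 : p * (max u 0) ^ (p - 1) = 0 := by
      rw [max_eq_right h.le, Real.zero_rpow (sub_ne_zero.2 hp1), mul_zero]
    rw [h2]
    refine h1.congr_of_eventuallyEq ?_
    filter_upwards [Iio_mem_nhds h] with y hy
    rw [max_eq_right (le_of_lt hy), Real.zero_rpow hp]
  · have h1 := Real.hasDerivAt_rpow_const (x := u) (p := p) (Or.inl hu)
    rw [max_eq_left h.le]
    refine h1.congr_of_eventuallyEq ?_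
    filter_upwards [Ioi_mem_nhds h] with y hy
    rw [max_eq_left (le_of_lt hy)]

lemma aux_cont {p : ℝ} (hp : 0 ≤ p) : Continuous (fun u : ℝ => (max u 0) ^ p) :=
  (continuous_id.max continuous_const).rpow_const (fun _ => Or.inr hp)

lemma aux_deriv {p : ℝ} (hp : 1 < p) (u : ℝ) :
    HasDerivAt (fun u : ℝ => (max u 0) ^ p) (p * (max u 0) ^ (p - 1)) u := by
  by_cases hu : u = 0
  · subst hu
    exact hasDerivAt_of_hasDerivAt_of_ne (g := fun u : ℝ => p * (max u 0) ^ (p - 1))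
      (fun y hy => aux_deriv_ne (by linarith) hp.ne' hy)
      (aux_cont (by linarith)).continuousAt
      (continuous_const.mul (aux_cont (by linarith))).continuousAt
  · exact aux_deriv_ne (by linarith) hp.ne' hu

/-- The test function and its two derivatives. -/
def tf (μ r : ℝ) : ℝ := (max (Real.log r) 0) ^ μ
def tf1 (μ r : ℝ) : ℝ := μ * (max (Real.log r) 0) ^ (μ - 1) * r⁻¹
def tf2 (μ r : ℝ) : ℝ :=
  (μ * ((μ - 1) * (max (Real.log r) 0) ^ (μ - 1 - 1)) * r⁻¹) * r⁻¹ +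
    μ * (max (Real.log r) 0) ^ (μ - 1) * (-(r ^ 2)⁻¹)

lemma tf_deriv {μ : ℝ} (h1 : 3 / 2 < μ) {r : ℝ} (hr : 0 < r) :
    HasDerivAt (tf μ) (tf1 μ r) r :=
  (aux_deriv (p := μ) (by linarith) (Real.log r)).comp r (Real.hasDerivAt_log hr.ne')

lemma tf1_deriv {μ : ℝ} (h1 : 3 / 2 < μ) (h2 : μ < 2) {r : ℝ} (hr : 0 < r) (hr1 : r ≠ 1) :
    HasDerivAt (tf1 μ) (tf2 μ r) r := by
  have hl : Real.log r ≠ 0 := by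
    intro h
    rcases Real.log_eq_zero.1 h with h | h | h <;> first | exact hr1 h | linarith
  have a := (aux_deriv_ne (p := μ - 1) (by linarith) (by linarith) hl).comp r
    (Real.hasDerivAt_log hr.ne')
  have b := (a.const_mul μ).mul (hasDerivAt_inv hr.ne')
  refine HasDerivAt.congr_deriv (f := tf1 μ) b ?_
  simp only [tf2, Function.comp]
  ring

lemma tf1_cont {μ : ℝ} (h1 : 3 / 2 < μ) : ContinuousOn (tf1 μ) (Ioi 0) := by
  refine ContinuousOn.mul (continuousOn_const.mul ?_) ?_
  · exact (aux_cont (p := μ - 1) (by linarith)).comp_continuousOn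
      (Real.continuousOn_log.mono (fun x hx => ne_of_gt hx))
  · exact continuousOn_inv₀.mono (fun x hx => ne_of_gt hx)

lemma tf_energy {μ : ℝ} (h1 : 3 / 2 < μ) (h2 : μ < 2) :
    IntegrableOn (fun r : ℝ => r * (tf2 μ r) ^ 2 + (1 / r) * (tf1 μ r) ^ 2) (Ioi 0) := by
  rw [← Ioc_union_Ioi_eq_Ioi (zero_le_one' ℝ), integrableOn_union]
  constructor
  · refine (integrableOn_zero (ε' := ℝ)).congr_fun (fun r hr => ?_) measurableSet_Ioc
    have hl : max (Real.log r) 0 = 0 := max_eq_right (Real.log_nonpos hr.1.le hr.2)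
    have e1 : (0:ℝ) ^ (μ - 1) = 0 := Real.zero_rpow (by linarith)
    have e2 : (0:ℝ) ^ (μ - 1 - 1) = 0 := Real.zero_rpow (by linarith)
    simp [tf1, tf2, hl, e1, e2]
  · have him : Real.exp '' (Ioi 0) = Ioi 1 := by
      ext y
      constructor
      · rintro ⟨x, hx, rfl⟩
        exact Real.one_lt_exp_iff.2 hx
      · intro hy
        have hy' : (1:ℝ) < y := hy
        exact ⟨Real.log y, Real.log_pos hy', Real.exp_log (by linarith)⟩
    rw [← him, integrableOn_image_iff_integrableOn_abs_deriv_smul measurableSet_Ioi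
      (fun x _ => (Real.hasDerivAt_exp x).hasDerivWithinAt) Real.exp_injective.injOn]
    have g : ∀ s : ℝ, -1 < s →
        IntegrableOn (fun x : ℝ => x ^ s * Real.exp (-2 * x ^ (1:ℝ))) (Ioi 0) := fun s hs =>
      integrableOn_rpow_mul_exp_neg_mul_rpow hs one_pos two_pos
    have G := (((g (2 * (μ - 1 - 1)) (by linarith)).const_mul ((μ * (μ - 1)) ^ 2)).add
      ((g ((μ - 1 - 1) + (μ - 1)) (by linarith)).const_mul (- 2 * μ * (μ * (μ - 1))))).add
      ((g (2 * (μ - 1)) (by linarith)).const_mul (2 * μ ^ 2))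
    refine IntegrableOn.congr_fun G (fun x hx => ?_) measurableSet_Ioi
    have hx' : (0:ℝ) < x := hx
    have p1 : x ^ (2 * (μ - 1 - 1)) = (x ^ (μ - 1 - 1)) ^ 2 := by
      rw [mul_comm, Real.rpow_mul hx'.le]; norm_cast
    have p2 : x ^ (2 * (μ - 1)) = (x ^ (μ - 1)) ^ 2 := by
      rw [mul_comm, Real.rpow_mul hx'.le]; norm_cast
    have p3 : x ^ ((μ - 1 - 1) + (μ - 1)) = x ^ (μ - 1 - 1) * x ^ (μ - 1) :=
      Real.rpow_add hx' _ _
    have p4 : Real.exp (-2 * x) = (Real.exp x ^ 2)⁻¹ := by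
      rw [← Real.exp_nat_mul, ← Real.exp_neg]; congr 1; push_cast; ring
    have hE := Real.exp_pos x
    simp only [Pi.add_apply, tf1, tf2, Real.log_exp, max_eq_left hx'.le, p1, p2, p3, p4,
      Real.rpow_one, smul_eq_mul, abs_of_pos hE]
    generalize x ^ (μ - 1 - 1) = A
    generalize x ^ (μ - 1) = B
    generalize Real.exp x = E at *
    field_simp
    ring

lemma tf2_meas (μ : ℝ) : Measurable (tf2 μ) := by
  unfold tf2
  have hl : Measurable (fun r : ℝ => max (Real.log r) 0) := Real.measurable_log.max measurable_const
  have := hl.pow_const (μ - 1 - 1)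
  have := hl.pow_const (μ - 1)
  fun_prop

lemma tf2_int {μ : ℝ} (h1 : 3 / 2 < μ) (h2 : μ < 2) {a b : ℝ} (ha : 0 < a) :
    IntegrableOn (tf2 μ) (Icc a b) := by
  have hE := (tf_energy h1 h2).mono_set (fun x (hx : x ∈ Icc a b) => lt_of_lt_of_le ha hx.1)
  have hc : IntegrableOn (fun _ : ℝ => (1:ℝ)) (Icc a b) :=
    integrableOn_const (by simp)
  refine Integrable.mono' (hc.add (hE.const_mul a⁻¹)) (tf2_meas μ).aestronglyMeasurable ?_
  filter_upwards [ae_restrict_mem measurableSet_Icc] with r hr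
  have hr0 : 0 < r := lt_of_lt_of_le ha hr.1
  have t1 : 0 ≤ (1 / r) * (tf1 μ r) ^ 2 := by positivity
  have t2 : (tf2 μ r) ^ 2 ≤ a⁻¹ * (r * (tf2 μ r) ^ 2) := by
    rw [← mul_assoc]
    refine le_mul_of_one_le_left (sq_nonneg _) ?_
    rw [inv_mul_eq_div, one_le_div ha]; exact hr.1
  have t3 : a⁻¹ * (r * (tf2 μ r) ^ 2) ≤ a⁻¹ * (r * (tf2 μ r) ^ 2 + (1 / r) * (tf1 μ r) ^ 2) := by
    have := inv_pos.2 ha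
    gcongr
    linarith
  have t4 : |tf2 μ r| ≤ 1 + (tf2 μ r) ^ 2 := by
    rw [← sq_abs]; nlinarith [sq_nonneg (|tf2 μ r| - 1), abs_nonneg (tf2 μ r)]
  simp only [Pi.add_apply, Real.norm_eq_abs]
  linarith

lemma tf_ftc {μ : ℝ} (h1 : 3 / 2 < μ) (h2 : μ < 2) {a x : ℝ} (ha : 0 < a) (hx : a ≤ x) :
    ∫ t in a..x, tf2 μ t = tf1 μ x - tf1 μ a := by
  refine integral_eq_of_hasDerivAt_off_countable_of_le _ _ hx (countable_singleton (1:ℝ))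
    ((tf1_cont h1).mono fun y hy => lt_of_lt_of_le ha hy.1)
    (fun y hy => tf1_deriv h1 h2 (ha.trans hy.1.1) hy.2) ?_
  rw [intervalIntegrable_iff_integrableOn_Icc_of_le hx]
  exact tf2_int h1 h2 ha

/-- The function `max(log r, 0)^μ` as an element of `Λ₀`. -/
def tF (μ : ℝ) (h1 : 3 / 2 < μ) (h2 : μ < 2) : Lambda0 where
  f := fun r => (tf μ r : ℂ)
  f' := fun r => (tf1 μ r : ℂ)
  f'' := fun r => (tf2 μ r : ℂ)
  hasDeriv := fun r hr => (tf_deriv h1 hr).ofReal_comp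
  contDeriv := Complex.continuous_ofReal.comp_continuousOn (tf1_cont h1)
  locAC := fun a b ha hab => by
    refine ⟨Integrable.ofReal (tf2_int h1 h2 ha), fun x hx => ?_⟩
    rw [intervalIntegral.integral_ofReal, tf_ftc h1 h2 ha hx.1]
    push_cast
    ring
  energyFin := by
    simpa only [Complex.norm_real, Real.norm_eq_abs, sq_abs] using tf_energy h1 h2

/-- The generalised fourth difference of `k ↦ k^μ`. -/
def dq (μ q : ℝ) : ℝ :=
  4 ^ μ - (2 * q + 2) * 3 ^ μ + (q ^ 2 + 4 * q + 1) * 2 ^ μ - (2 * q ^ 2 + 2 * q)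

lemma dq_pos : 0 < dq (3 / 2) 1 := by
  have h2 : (2:ℝ) ^ ((3:ℝ) / 2) = 2 * √2 := by
    rw [show (3:ℝ) / 2 = 1 + 1 / 2 by norm_num, Real.rpow_add (by norm_num), Real.rpow_one,
      Real.sqrt_eq_rpow]
  have h3 : (3:ℝ) ^ ((3:ℝ) / 2) = 3 * √3 := by
    rw [show (3:ℝ) / 2 = 1 + 1 / 2 by norm_num, Real.rpow_add (by norm_num), Real.rpow_one,
      Real.sqrt_eq_rpow]
  have h4 : (4:ℝ) ^ ((3:ℝ) / 2) = 8 := by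
    rw [show (4:ℝ) = 2 ^ (2:ℝ) by norm_num, ← Real.rpow_mul (by norm_num)]
    norm_num
  have s3 : √3 < 1.733 := by rw [Real.sqrt_lt' (by norm_num)]; norm_num
  have s2 : 1.414 < √2 := Real.lt_sqrt_of_sq_lt (by norm_num)
  unfold dq
  rw [h2, h3, h4]
  norm_num at *
  linarith

lemma exists_mu {ε : ℝ} (hε : 0 < ε) :
    ∃ μ : ℝ, 3 / 2 < μ ∧ μ < 2 ∧ μ ≤ 3 / 2 + ε ∧ 0 < dq μ 1 := by
  have hc : ContinuousAt (fun μ => dq μ 1) (3 / 2) := by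
    unfold dq
    have k : ∀ c : ℝ, 0 < c → Continuous (fun μ : ℝ => c ^ μ) := fun c hc =>
      Real.continuous_const_rpow hc.ne'
    have := k 4 (by norm_num)
    have := k 3 (by norm_num)
    have := k 2 (by norm_num)
    fun_prop
  have e1 := (hc.eventually (lt_mem_nhds dq_pos)).filter_mono
    (nhdsWithin_le_nhds (s := Ioi (3 / 2 : ℝ)))
  have e2 : ∀ᶠ μ : ℝ in nhdsWithin (3 / 2) (Ioi (3 / 2)), μ ∈ Ioo (3 / 2) (min 2 (3 / 2 + ε)) :=
    Ioo_mem_nhdsGT (by rw [lt_min_iff]; constructor <;> linarith)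
  obtain ⟨μ, h, h'⟩ := (e1.and e2).exists
  exact ⟨μ, h'.1, h'.2.trans_le (min_le_left _ _), h'.2.le.trans (min_le_right _ _), h⟩

lemma exists_N {μ : ℝ} (h : 0 < dq μ 1) : ∃ N : ℕ, ∀ n : ℕ, N ≤ n →
    dq μ 1 / 2 ≤ dq μ (Real.exp (2 * (1 / ((n : ℝ) - 1) / 16))) ∧
      Real.exp (2 * (1 / ((n : ℝ) - 1) / 16)) ≤ 2 := by
  have t1 : Tendsto (fun n : ℕ => 1 / ((n : ℝ) - 1)) atTop (nhds 0) := by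
    refine tendsto_const_nhds.div_atTop ?_
    exact tendsto_atTop_add_const_right _ (-1) tendsto_natCast_atTop_atTop
  have t2 : Tendsto (fun n : ℕ => Real.exp (2 * (1 / ((n : ℝ) - 1) / 16))) atTop (nhds 1) := by
    have c : Continuous (fun x : ℝ => Real.exp (2 * (x / 16))) := by fun_prop
    have := (c.tendsto 0).comp t1
    simpa [Function.comp_def] using this
  have hc : Continuous (fun q => dq μ q) := by
    unfold dq
    fun_prop
  have e1 := t2.eventually ((hc.tendsto 1).eventually (lt_mem_nhds (half_lt_self h)))
  have e2 := t2.eventually (gt_mem_nhds (one_lt_two (α := ℝ)))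
  obtain ⟨N, hN⟩ := eventually_atTop.1 (e1.and e2)
  exact ⟨N, fun n hn => ⟨(hN n hn).1.le, (hN n hn).2.le⟩⟩

/-- Continuity extends the local representation of the spline to the left end point. -/
lemma spline_Ico {σ : ℝ → ℂ} {y : ℝ} (hy : 1 < y) (hσ : ContinuousOn σ (Ioi 0)) {a b c d : ℂ}
    (h : ∀ x ∈ Ioo 1 y, σ x = a * (x : ℂ) ^ 2 + b * (x : ℂ) ^ 2 * (Real.log x : ℂ) + c +
      d * (Real.log x : ℂ)) : ∀ x ∈ Ico 1 y, σ x = a * (x : ℂ) ^ 2 +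
        b * (x : ℂ) ^ 2 * (Real.log x : ℂ) + c + d * (Real.log x : ℂ) := by
  intro x hx
  rcases eq_or_lt_of_le hx.1 with rfl | hx1
  · have hlog : ContinuousAt (fun x : ℝ => (Real.log x : ℂ)) 1 :=
      Complex.continuous_ofReal.continuousAt.comp (Real.continuousAt_log one_ne_zero)
    have hcast : ContinuousAt (fun x : ℝ => (x : ℂ)) 1 := Complex.continuous_ofReal.continuousAt
    have c2 : ContinuousAt (fun x : ℝ => a * (x : ℂ) ^ 2 +
        b * (x : ℂ) ^ 2 * (Real.log x : ℂ) + c + d * (Real.log x : ℂ)) 1 := by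
      fun_prop
    have c1 : ContinuousAt σ 1 := hσ.continuousAt (Ioi_mem_nhds one_pos)
    have l1 : Tendsto σ (nhdsWithin 1 (Ioi 1)) (nhds (σ 1)) := c1.tendsto.mono_left nhdsWithin_le_nhds
    have l2 := c2.tendsto.mono_left (nhdsWithin_le_nhds (s := Ioi (1:ℝ)))
    refine tendsto_nhds_unique l1 (l2.congr' ?_)
    filter_upwards [Ioo_mem_nhdsGT hy] with z hz
    exact (h z hz).symm
  · exact h x ⟨hx1, hx.2⟩

/-- sharpness of the approximation order `3/2`: for uniformly spaced knots
`r_j = 1 + (j−1)h` on `[1,2]` with `h = 1/(n−1)`, for every `ε > 0` there are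
`f_ε ∈ Λ₀` and `M > 0` such that for all sufficiently large `n` and every Beppo Levi
`L₀`-spline `σ_h` on these knots, `M·h^{3/2+ε} ≤ ‖f_ε − σ_h‖_{L∞[1,2]}`. -/
theorem stmt15 :
    ∀ ε : ℝ, 0 < ε → ∃ (F : Lambda0) (M : ℝ), 0 < M ∧ ∃ N : ℕ, ∀ n : ℕ, 2 ≤ n → N ≤ n →
      ∀ σ : ℝ → ℂ,
        IsBLSpline n (fun j => 1 + ((j : ℝ) - 1) * (1 / ((n : ℝ) - 1))) σ →
        M * (1 / ((n : ℝ) - 1)) ^ ((3:ℝ)/2 + ε) ≤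
          sSup ((fun x => ‖F.f x - σ x‖) '' Set.Icc (1:ℝ) 2) := by
  intro ε hε
  obtain ⟨μ, hμ1, hμ2, hμε, hD⟩ := exists_mu hε
  obtain ⟨N, hN⟩ := exists_N hD
  refine ⟨tF μ hμ1 hμ2, (1 / 16) ^ μ * (dq μ 1 / 2) / 36, by positivity, N, ?_⟩
  intro n hn2 hNn σ hσ
  obtain ⟨hq1, hq2⟩ := hN n hNn
  have hn1 : (1:ℝ) ≤ (n:ℝ) - 1 := by
    have : (2:ℝ) ≤ (n:ℝ) := by exact_mod_cast hn2
    linarith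
  set h : ℝ := 1 / ((n : ℝ) - 1) with hh
  have hpos : 0 < h := by positivity
  have hle : h ≤ 1 := by rw [hh, div_le_one (by linarith)]; exact hn1
  have hcont : ContinuousOn σ (Ioi 0) := hσ.smooth.continuousOn
  obtain ⟨a, b, c, d, hp⟩ := hσ.pieces 1 le_rfl hn2
  have hp' := spline_Ico (y := 1 + h) (by linarith) hcont (a := a) (b := b) (c := c) (d := d)
    (fun x hx => hp x (by norm_num; norm_num at hx; simpa [hh] using hx))
  set S := sSup ((fun x => ‖(tF μ hμ1 hμ2).f x - σ x‖) '' Set.Icc (1:ℝ) 2) with hS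
  have hbdd : BddAbove ((fun x => ‖(tF μ hμ1 hμ2).f x - σ x‖) '' Set.Icc (1:ℝ) 2) := by
    refine isCompact_Icc.bddAbove_image ?_
    refine ContinuousOn.norm (ContinuousOn.sub ?_ (hcont.mono fun x hx => lt_of_lt_of_le one_pos hx.1))
    intro x hx
    exact ((tF μ hμ1 hμ2).hasDeriv x (lt_of_lt_of_le one_pos hx.1)).continuousAt.continuousWithinAt
  set δ := h / 16 with hδ
  have hδ0 : 0 < δ := by positivity
  set q := Real.exp (2 * δ) with hq
  have hq0 : 0 < q := Real.exp_pos _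
  have key : ∀ k : ℕ, k ≤ 4 →
      (tF μ hμ1 hμ2).f (Real.exp (k * δ)) = ((δ ^ μ * (k:ℝ) ^ μ : ℝ) : ℂ) ∧
      σ (Real.exp (k * δ)) = a * (q:ℂ) ^ k + b * (q:ℂ) ^ k * (k * δ) + c + d * (k * δ) ∧
      ‖(tF μ hμ1 hμ2).f (Real.exp (k * δ)) - σ (Real.exp (k * δ))‖ ≤ S := by
    intro k hk
    have hk' : (k:ℝ) ≤ 4 := by exact_mod_cast hk
    have hk0 : (0:ℝ) ≤ k := Nat.cast_nonneg k
    have l1 : 1 ≤ Real.exp (k * δ) := Real.one_le_exp (by positivity)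
    have l2 : Real.exp (k * δ) < 1 + h := by
      have u : k * δ ≤ h / 4 := by rw [hδ]; nlinarith
      have v : Real.exp (k * δ) ≤ Real.exp (h / 4) := Real.exp_le_exp.2 u
      have w : 1 - h / 4 ≤ Real.exp (-(h / 4)) := by
        have := Real.add_one_le_exp (-(h / 4)); linarith
      have z : Real.exp (h / 4) * Real.exp (-(h / 4)) = 1 := by rw [← Real.exp_add]; simp
      have := Real.exp_pos (h / 4)
      nlinarith
    refine ⟨?_, ?_, ?_⟩
    · simp only [tF, tf, Real.log_exp]
      rw [max_eq_left (by positivity), Real.mul_rpow hk0 hδ0.le, mul_comm]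
    · rw [hp' _ ⟨l1, l2⟩, Real.log_exp]
      have : ((Real.exp (k * δ) : ℝ) : ℂ) ^ 2 = (q:ℂ) ^ k := by
        rw [← Complex.ofReal_pow, ← Complex.ofReal_pow, hq, ← Real.exp_nat_mul, ← Real.exp_nat_mul]
        congr 2; push_cast; ring
      rw [this]
      push_cast
      ring
    · exact le_csSup hbdd ⟨_, ⟨l1, by linarith⟩, rfl⟩
  obtain ⟨f0, s0, b0⟩ := key 0 (by norm_num)
  obtain ⟨f1, s1, b1⟩ := key 1 (by norm_num)
  obtain ⟨f2, s2, b2⟩ := key 2 (by norm_num)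
  obtain ⟨f3, s3, b3⟩ := key 3 (by norm_num)
  obtain ⟨f4, s4, b4⟩ := key 4 (by norm_num)
  rw [f0, s0] at b0
  rw [f1, s1] at b1
  rw [f2, s2] at b2
  rw [f3, s3] at b3
  rw [f4, s4] at b4
  have z0 : ((0:ℕ):ℝ) ^ μ = 0 := by rw [Nat.cast_zero, Real.zero_rpow (by linarith)]
  have z1 : ((1:ℕ):ℝ) ^ μ = 1 := by simp
  generalize hE0 : ((δ ^ μ * ((0:ℕ):ℝ) ^ μ : ℝ) : ℂ) - _ = E0 at b0
  generalize hE1 : ((δ ^ μ * ((1:ℕ):ℝ) ^ μ : ℝ) : ℂ) - _ = E1 at b1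
  generalize hE2 : ((δ ^ μ * ((2:ℕ):ℝ) ^ μ : ℝ) : ℂ) - _ = E2 at b2
  generalize hE3 : ((δ ^ μ * ((3:ℕ):ℝ) ^ μ : ℝ) : ℂ) - _ = E3 at b3
  generalize hE4 : ((δ ^ μ * ((4:ℕ):ℝ) ^ μ : ℝ) : ℂ) - _ = E4 at b4
  have ident : ((δ ^ μ * dq μ q : ℝ) : ℂ) = E4 - ((2 * q + 2 : ℝ) : ℂ) * E3 +
      ((q ^ 2 + 4 * q + 1 : ℝ) : ℂ) * E2 - ((2 * q ^ 2 + 2 * q : ℝ) : ℂ) * E1 +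
      ((q ^ 2 : ℝ) : ℂ) * E0 := by
    rw [← hE0, ← hE1, ← hE2, ← hE3, ← hE4, z0, z1]
    unfold dq
    push_cast
    ring
  have est : ‖((δ ^ μ * dq μ q : ℝ) : ℂ)‖ ≤ S + (2 * q + 2) * S + (q ^ 2 + 4 * q + 1) * S +
      (2 * q ^ 2 + 2 * q) * S + q ^ 2 * S := by
    have nm : ∀ (t : ℝ) (E : ℂ), 0 ≤ t → ‖E‖ ≤ S → ‖(t : ℂ) * E‖ ≤ t * S := by
      intro t E ht hE
      rw [norm_mul, Complex.norm_real, Real.norm_of_nonneg ht]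
      gcongr
    rw [ident]
    refine (norm_add_le _ _).trans (add_le_add ((norm_sub_le _ _).trans (add_le_add
      ((norm_add_le _ _).trans (add_le_add ((norm_sub_le _ _).trans (add_le_add b4 ?_)) ?_)) ?_)) ?_)
    · exact nm _ _ (by positivity) b3
    · exact nm _ _ (by positivity) b2
    · exact nm _ _ (by positivity) b1
    · exact nm _ _ (by positivity) b0
  have hS0 : 0 ≤ S := (norm_nonneg _).trans b0
  have hδμ : 0 < δ ^ μ := Real.rpow_pos_of_pos hδ0 _
  have est2 : δ ^ μ * (dq μ 1 / 2) ≤ 36 * S := by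
    have e1 : δ ^ μ * (dq μ 1 / 2) ≤ δ ^ μ * dq μ q := by gcongr
    have e2 : δ ^ μ * dq μ q ≤ ‖((δ ^ μ * dq μ q : ℝ) : ℂ)‖ := by
      rw [Complex.norm_real]; exact Real.le_norm_self _
    have e3 : 4 * (1 + q) ^ 2 * S ≤ 36 * S := by
      refine mul_le_mul_of_nonneg_right ?_ hS0
      nlinarith
    nlinarith
  have hδe : δ ^ μ = (1 / 16) ^ μ * h ^ μ := by
    rw [← Real.mul_rpow (by norm_num) hpos.le, hδ]; congr 1; ring
  have hmono : h ^ ((3:ℝ) / 2 + ε) ≤ h ^ μ := Real.rpow_le_rpow_of_exponent_ge hpos hle hμε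
  calc (1 / 16) ^ μ * (dq μ 1 / 2) / 36 * h ^ ((3:ℝ) / 2 + ε)
      ≤ (1 / 16) ^ μ * (dq μ 1 / 2) / 36 * h ^ μ := by gcongr
    _ = δ ^ μ * (dq μ 1 / 2) / 36 := by rw [hδe]; ring
    _ ≤ S := by linarith
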